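/- Let 𝒢 = {g₁,…,g_m} be a tree-structured group structure on {1,…,p} with positive weights (η_g), i.e., any two groups are either disjoint or one is contained in the other, and suppose the enumeration satisfies: for i < j, either g_i ⊂ g_j or g_i ∩ g_j = ∅. Let Ω(w) = Σ_{g∈𝒢} η_g ‖w_g‖_∞ and λ > 0. For each group g, let Prox^g : ℝ^p → ℝ^p be the map that leaves coordinates outside g unchanged and replaces w_g by the minimizer of v ↦ ½‖w_g − v‖₂² + λη_g‖v‖_∞. Then the proximal operator of λΩ, i.e., the map sending u to the unique minimizer of w ↦ ½‖u−w‖₂² + λΩ(w), equals the composition Prox^{g_m} ∘ ⋯ ∘ Prox^{g_1}. -/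

import Mathlib

open Finset

/-- The ℓ∞-norm of the subvector of `w` indexed by the group `g`. -/
noncomputable def gsup {p : ℕ} (g : Finset (Fin p)) (w : Fin p → ℝ) : ℝ :=
  ↑(g.sup fun j => Real.nnabs (w j))

open Finset

lemma gsup_nonneg' {p : ℕ} (g : Finset (Fin p)) (w : Fin p → ℝ) : 0 ≤ gsup g w :=
  NNReal.coe_nonneg _

lemma abs_le_gsup {p : ℕ} (g : Finset (Fin p)) (w : Fin p → ℝ) {j : Fin p} (hj : j ∈ g) :
    |w j| ≤ gsup g w := by
  have h : Real.nnabs (w j) ≤ g.sup fun j => Real.nnabs (w j) :=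
    Finset.le_sup (f := fun j => Real.nnabs (w j)) hj
  have h2 := NNReal.coe_le_coe.2 h
  simpa [gsup] using h2

lemma gsup_le' {p : ℕ} (g : Finset (Fin p)) (w : Fin p → ℝ) {a : ℝ} (ha : 0 ≤ a)
    (h : ∀ j ∈ g, |w j| ≤ a) : gsup g w ≤ a := by
  have h1 : (g.sup fun j => Real.nnabs (w j)) ≤ (⟨a, ha⟩ : NNReal) := by
    refine Finset.sup_le fun j hj => ?_
    refine NNReal.coe_le_coe.1 ?_
    have h2 := h j hj
    rw [← Real.coe_nnabs] at h2
    exact h2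
  exact NNReal.coe_le_coe.2 h1

/-- Variational inequality for the elementary prox. -/
lemma prox_var {p : ℕ} (g : Finset (Fin p)) (c : ℝ) (hc : 0 < c) (w x : Fin p → ℝ)
    (hx : ∀ v : Fin p → ℝ, (1/2) * ∑ j ∈ g, (w j - x j)^2 + c * gsup g x
          ≤ (1/2) * ∑ j ∈ g, (w j - v j)^2 + c * gsup g v) (d : Fin p → ℝ) (s : ℝ)
    (hs : ∀ t : ℝ, 0 < t → t ≤ 1 → gsup g (fun j => x j + t * d j) ≤ gsup g x + t * s) :
    ∑ j ∈ g, (w j - x j) * d j ≤ c * s := by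
  set A := ∑ j ∈ g, (w j - x j) * d j with hA
  set B := ∑ j ∈ g, (d j)^2 with hB
  have hB0 : 0 ≤ B := Finset.sum_nonneg fun j _ => sq_nonneg _
  have key : ∀ t : ℝ, 0 < t → t ≤ 1 → A ≤ c * s + t * B := by
    intro t ht ht1
    have h1 := hx (fun j => x j + t * d j)
    have h2 := mul_le_mul_of_nonneg_left (hs t ht ht1) hc.le
    have h3 : ∑ j ∈ g, (w j - (x j + t * d j))^2
        = ∑ j ∈ g, (w j - x j)^2 - 2 * t * A + t^2 * B := by
      rw [hA, hB, Finset.mul_sum, Finset.mul_sum, ← Finset.sum_sub_distrib,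
        ← Finset.sum_add_distrib]
      exact Finset.sum_congr rfl fun j _ => by ring
    simp only [h3] at h1
    have h4 : t * A ≤ t * (c * s + t * B) := by nlinarith [mul_nonneg (sq_nonneg t) hB0]
    exact le_of_mul_le_mul_left h4 ht
  by_contra hcon
  push Not at hcon
  have hd : 0 < A - c * s := by linarith
  have hk := key (min 1 ((A - c * s) / (2 * (B + 1)))) (by positivity) (min_le_left _ _)
  have h5 : min 1 ((A - c * s) / (2 * (B + 1))) * B ≤ (A - c * s) / (2 * (B + 1)) * (B + 1) :=
    mul_le_mul (min_le_right _ _) (by linarith) hB0 (by positivity)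
  have h6 : (A - c * s) / (2 * (B + 1)) * (B + 1) = (A - c * s) / 2 := by
    field_simp
  linarith

lemma prox_dual {p : ℕ} (g : Finset (Fin p)) (c : ℝ) (hc : 0 < c) (w x : Fin p → ℝ)
    (hx : ∀ v : Fin p → ℝ, (1/2) * ∑ j ∈ g, (w j - x j)^2 + c * gsup g x
          ≤ (1/2) * ∑ j ∈ g, (w j - v j)^2 + c * gsup g v) (v : Fin p → ℝ) :
    ∑ j ∈ g, (w j - x j) * v j ≤ c * gsup g v := by
  refine prox_var g c hc w x hx v _ fun t ht _ => ?_
  have h1 := gsup_nonneg' g x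
  have h2 := gsup_nonneg' g v
  refine gsup_le' _ _ (by positivity) fun j hj => ?_
  have h3 := abs_le_gsup g x hj
  have h4 := mul_le_mul_of_nonneg_left (abs_le_gsup g v hj) ht.le
  have h5 := abs_add_le (x j) (t * v j)
  rw [abs_mul, abs_of_pos ht] at h5
  linarith

lemma prox_tight {p : ℕ} (g : Finset (Fin p)) (c : ℝ) (hc : 0 < c) (w x : Fin p → ℝ)
    (hx : ∀ v : Fin p → ℝ, (1/2) * ∑ j ∈ g, (w j - x j)^2 + c * gsup g x
          ≤ (1/2) * ∑ j ∈ g, (w j - v j)^2 + c * gsup g v) :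
    c * gsup g x ≤ ∑ j ∈ g, (w j - x j) * x j := by
  have h := prox_var g c hc w x hx (fun j => - x j) (- gsup g x) fun t ht ht1 => by
    have h1 := gsup_nonneg' g x
    have h0 : 0 ≤ gsup g x + t * -gsup g x := by nlinarith
    refine gsup_le' _ _ h0 fun j hj => ?_
    have h3 := abs_le_gsup g x hj
    have : x j + t * -x j = (1 - t) * x j := by ring
    rw [this, abs_mul, abs_of_nonneg (by linarith)]
    nlinarith
  have h2 : ∑ j ∈ g, (w j - x j) * -x j = - ∑ j ∈ g, (w j - x j) * x j := by
    rw [← Finset.sum_neg_distrib]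
    exact Finset.sum_congr rfl fun j _ => by ring
  rw [h2] at h
  linarith

/-- The elementary prox clips at level `gsup g x`. -/
lemma prox_clip {p : ℕ} (g : Finset (Fin p)) (c : ℝ) (hc : 0 < c) (w x : Fin p → ℝ)
    (hx : ∀ v : Fin p → ℝ, (1/2) * ∑ j ∈ g, (w j - x j)^2 + c * gsup g x
          ≤ (1/2) * ∑ j ∈ g, (w j - v j)^2 + c * gsup g v) (j : Fin p) (hj : j ∈ g) :
    |w j - x j| ≤ max (|w j| - gsup g x) 0 := by
  set τ := gsup g x with hτ
  have hτ0 : 0 ≤ τ := gsup_nonneg' g x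
  set y : Fin p → ℝ := fun j => max (-τ) (min (w j) τ) with hy
  have hyτ : ∀ j, |y j| ≤ τ := fun j => by
    rw [abs_le]
    exact ⟨le_max_left _ _, max_le (by linarith) (min_le_right _ _)⟩
  have hyd : ∀ j, |w j - y j| = max (|w j| - τ) 0 := fun j => by
    simp only [hy]
    grind
  have hgy : gsup g y ≤ τ := gsup_le' _ _ hτ0 fun j _ => hyτ j
  have h1 := hx y
  have h2 := mul_le_mul_of_nonneg_left hgy hc.le
  have hle : ∀ i ∈ g, (w i - y i)^2 ≤ (w i - x i)^2 := fun i hi => by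
    rw [sq_le_sq, hyd]
    have := abs_le_gsup g x hi
    have h3 := abs_sub_abs_le_abs_sub (w i) (x i)
    exact max_le (by linarith) (abs_nonneg _)
  have hge : ∑ i ∈ g, (w i - x i)^2 ≤ ∑ i ∈ g, (w i - y i)^2 := by linarith
  have heq := (Finset.sum_eq_sum_iff_of_le hle).1 (le_antisymm (Finset.sum_le_sum hle) hge) j hj
  rw [← hyd, ← sq_le_sq, heq]

/-- Tightness is preserved by a later prox. -/
lemma tight_step {p : ℕ} (h g : Finset (Fin p)) (hhg : h ⊆ g) (a c : ℝ) (ha : 0 < a)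
    (hc : 0 < c) (w x r : Fin p → ℝ)
    (hx : ∀ v : Fin p → ℝ, (1/2) * ∑ j ∈ g, (w j - x j)^2 + c * gsup g x
          ≤ (1/2) * ∑ j ∈ g, (w j - v j)^2 + c * gsup g v)
    (hd : ∀ v : Fin p → ℝ, ∑ j, r j * v j ≤ a * gsup h v)
    (ht : a * gsup h w ≤ ∑ j, r j * w j) :
    a * gsup h x ≤ ∑ j, r j * x j := by
  set τ := gsup g x with hτ
  set M := gsup h w with hM
  have hτ0 : 0 ≤ τ := gsup_nonneg' g x
  have hM0 : 0 ≤ M := gsup_nonneg' h w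
  have h1 := hd (fun j => w j - x j)
  have h2 : gsup h (fun j => w j - x j) ≤ M - min M τ := by
    refine gsup_le' _ _ (by linarith [min_le_left M τ]) fun j hj => ?_
    have h3 := prox_clip g c hc w x hx j (hhg hj)
    have h4 := abs_le_gsup h w hj
    refine h3.trans (max_le ?_ (by linarith [min_le_left M τ]))
    linarith [min_le_right M τ]
  have h3 : gsup h x ≤ min M τ := by
    refine gsup_le' _ _ (le_min hM0 hτ0) fun j hj => ?_
    have h3 := prox_clip g c hc w x hx j (hhg hj)
    have h4 := abs_le_gsup h w hj
    have h5 := abs_le_gsup g x (hhg hj)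
    refine le_min ?_ h5
    rcases le_total (|w j| - τ) 0 with h6 | h6
    · rw [max_eq_right h6] at h3
      have : w j - x j = 0 := abs_nonpos_iff.1 h3
      have : x j = w j := by linarith
      rw [this]; exact h4
    · linarith
  have h4 : ∑ j, r j * (w j - x j) = ∑ j, r j * w j - ∑ j, r j * x j := by
    rw [← Finset.sum_sub_distrib]
    exact Finset.sum_congr rfl fun j _ => by ring
  rw [h4] at h1
  have h5 := mul_le_mul_of_nonneg_left h2 ha.le
  have h6 := mul_le_mul_of_nonneg_left h3 ha.le
  rw [mul_sub] at h5
  linarith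

lemma fold_decomp {p : ℕ} (u : Fin p → ℝ) (m : ℕ) : ∀ (g : Fin m → Finset (Fin p))
    (c : Fin m → ℝ) (_ : ∀ i, 0 < c i)
    (_ : ∀ i j : Fin m, i < j → g i ⊂ g j ∨ g i ∩ g j = ∅)
    (P : Fin m → (Fin p → ℝ) → (Fin p → ℝ))
    (_ : ∀ (i : Fin m) (w : Fin p → ℝ),
      (∀ j, j ∉ g i → P i w j = w j) ∧
      (∀ v : Fin p → ℝ,
        (1/2) * ∑ j ∈ g i, (w j - P i w j)^2 + c i * gsup (g i) (P i w)
          ≤ (1/2) * ∑ j ∈ g i, (w j - v j)^2 + c i * gsup (g i) v)),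
    ∃ R : Fin m → Fin p → ℝ,
      (∀ i j, j ∉ g i → R i j = 0) ∧
      (∀ i (v : Fin p → ℝ), ∑ j, R i j * v j ≤ c i * gsup (g i) v) ∧
      (∀ i, c i * gsup (g i) (Fin.foldl m (fun w' i => P i w') u)
        ≤ ∑ j, R i j * Fin.foldl m (fun w' i => P i w') u j) ∧
      (∀ j, u j - Fin.foldl m (fun w' i => P i w') u j = ∑ i, R i j) := by
  induction m with
  | zero =>
    intro g c hc ht P hP
    exact ⟨fun i => i.elim0, fun i => i.elim0, fun i => i.elim0, fun i => i.elim0,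
      fun j => by simp⟩
  | succ m ih =>
    intro g c hc ht P hP
    obtain ⟨R, hR0, hRd, hRt, hRs⟩ := ih (fun i => g i.castSucc) (fun i => c i.castSucc)
      (fun i => hc _) (fun i j hij => ht _ _ (by simpa using hij)) (fun i => P i.castSucc)
      (fun i w => hP _ w)
    rw [Fin.foldl_succ_last]
    set W := Fin.foldl m (fun w' i => P i.castSucc w') u with hW
    set L := Fin.last m with hL
    obtain ⟨hout, hmin⟩ := hP L W
    have hsum : ∀ v : Fin p → ℝ,
        ∑ j, (W j - P L W j) * v j = ∑ j ∈ g L, (W j - P L W j) * v j := fun v => by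
      symm
      refine Finset.sum_subset (Finset.subset_univ _) fun j _ hj => ?_
      rw [hout j hj]; ring
    refine ⟨Fin.snoc R (fun j => W j - P L W j), ?_, ?_, ?_, ?_⟩
    · intro i
      refine Fin.lastCases ?_ (fun i => ?_) i
      · intro j hj
        simp only [Fin.snoc_last]
        rw [hout j hj]; ring
      · intro j hj
        simp only [Fin.snoc_castSucc]
        exact hR0 i j hj
    · intro i
      refine Fin.lastCases ?_ (fun i => ?_) i
      · intro v
        simp only [Fin.snoc_last]
        rw [hsum]
        exact prox_dual _ _ (hc L) _ _ hmin v
      · intro v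
        simp only [Fin.snoc_castSucc]
        exact hRd i v
    · intro i
      refine Fin.lastCases ?_ (fun i => ?_) i
      · simp only [Fin.snoc_last]
        rw [hsum]
        exact prox_tight _ _ (hc L) _ _ hmin
      · simp only [Fin.snoc_castSucc]
        rcases ht i.castSucc L (Fin.castSucc_lt_last i) with hsub | hdis
        · exact tight_step _ _ hsub.1 _ _ (hc _) (hc L) W _ _ hmin (hRd i) (hRt i)
        · have hag : ∀ j ∈ g i.castSucc, P L W j = W j := fun j hj =>
            hout j fun hj2 => by
              have : j ∈ g i.castSucc ∩ g L := Finset.mem_inter.2 ⟨hj, hj2⟩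
              rw [hdis] at this
              simp at this
          have e1 : gsup (g i.castSucc) (P L W) ≤ gsup (g i.castSucc) W :=
            gsup_le' _ _ (gsup_nonneg' _ _) fun j hj => by
              rw [hag j hj]; exact abs_le_gsup _ _ hj
          have e2 : ∑ j, R i j * P L W j = ∑ j, R i j * W j := by
            refine Finset.sum_congr rfl fun j _ => ?_
            by_cases hj : j ∈ g i.castSucc
            · rw [hag j hj]
            · rw [hR0 i j hj]; ring
          rw [e2]
          exact (mul_le_mul_of_nonneg_left e1 (hc _).le).trans (hRt i)
    · intro j
      rw [Fin.sum_univ_castSucc]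
      simp only [Fin.snoc_last, Fin.snoc_castSucc]
      rw [← hRs j]; ring

/-- for a tree-structured group structure `g₁,…,g_m` (ordered so that
for `i < j`, either `g_i ⊂ g_j` or `g_i ∩ g_j = ∅`), the proximal operator of
`λΩ` with `Ω(w) = ∑_i η_i ‖w_{g_i}‖_∞` is the composition
`Prox^{g_m} ∘ ⋯ ∘ Prox^{g_1}` of the elementary group-wise proximal maps. -/
theorem stmt8 {p m : ℕ} (g : Fin m → Finset (Fin p)) (η : Fin m → ℝ)
    (hne : ∀ i, (g i).Nonempty) (hη : ∀ i, 0 < η i)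
    (htree : ∀ i j : Fin m, i < j → g i ⊂ g j ∨ g i ∩ g j = ∅)
    (lam : ℝ) (hlam : 0 < lam)
    (P : Fin m → (Fin p → ℝ) → (Fin p → ℝ))
    (hP : ∀ (i : Fin m) (w : Fin p → ℝ),
      (∀ j, j ∉ g i → P i w j = w j) ∧
      (∀ v : Fin p → ℝ,
        (1/2) * ∑ j ∈ g i, (w j - P i w j)^2 + lam * η i * gsup (g i) (P i w)
          ≤ (1/2) * ∑ j ∈ g i, (w j - v j)^2 + lam * η i * gsup (g i) v))
    (u : Fin p → ℝ) :
    (∀ w : Fin p → ℝ,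
        (1/2) * ∑ j, (u j - Fin.foldl m (fun w' i => P i w') u j)^2
            + lam * ∑ i, η i * gsup (g i) (Fin.foldl m (fun w' i => P i w') u)
        ≤ (1/2) * ∑ j, (u j - w j)^2 + lam * ∑ i, η i * gsup (g i) w) ∧
    (∀ w : Fin p → ℝ,
        (1/2) * ∑ j, (u j - w j)^2 + lam * ∑ i, η i * gsup (g i) w
        ≤ (1/2) * ∑ j, (u j - Fin.foldl m (fun w' i => P i w') u j)^2
            + lam * ∑ i, η i * gsup (g i) (Fin.foldl m (fun w' i => P i w') u)
        → w = Fin.foldl m (fun w' i => P i w') u) := by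
  obtain ⟨R, _, hRd, hRt, hRs⟩ := fold_decomp u m g (fun i => lam * η i)
    (fun i => mul_pos hlam (hη i)) htree P hP
  set x := Fin.foldl m (fun w' i => P i w') u with hx
  have key : ∀ w : Fin p → ℝ,
      (1/2) * ∑ j, (u j - x j)^2 + lam * ∑ i, η i * gsup (g i) x + (1/2) * ∑ j, (w j - x j)^2
        ≤ (1/2) * ∑ j, (u j - w j)^2 + lam * ∑ i, η i * gsup (g i) w := by
    intro w
    have h1 : ∑ j, (u j - w j)^2 = ∑ j, (u j - x j)^2 + ∑ j, (w j - x j)^2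
        - 2 * ∑ j, (u j - x j) * (w j - x j) := by
      rw [Finset.mul_sum, ← Finset.sum_add_distrib, ← Finset.sum_sub_distrib]
      exact Finset.sum_congr rfl fun j _ => by ring
    have h2 : ∑ j, (u j - x j) * (w j - x j)
        = ∑ i, (∑ j, R i j * w j - ∑ j, R i j * x j) := by
      simp_rw [← Finset.sum_sub_distrib]
      rw [Finset.sum_comm]
      refine Finset.sum_congr rfl fun j _ => ?_
      rw [hRs j, Finset.sum_mul]
      exact Finset.sum_congr rfl fun i _ => by ring
    have h3 : ∑ i, (∑ j, R i j * w j - ∑ j, R i j * x j)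
        ≤ ∑ i, (lam * η i * gsup (g i) w - lam * η i * gsup (g i) x) :=
      Finset.sum_le_sum fun i _ => sub_le_sub (hRd i w) (hRt i)
    have h4 : ∑ i, (lam * η i * gsup (g i) w - lam * η i * gsup (g i) x)
        = lam * ∑ i, η i * gsup (g i) w - lam * ∑ i, η i * gsup (g i) x := by
      rw [Finset.mul_sum, Finset.mul_sum, ← Finset.sum_sub_distrib]
      exact Finset.sum_congr rfl fun j _ => by ring
    linarith
  refine ⟨fun w => ?_, fun w hw => ?_⟩
  · have h0 : 0 ≤ ∑ j, (w j - x j)^2 := Finset.sum_nonneg fun j _ => sq_nonneg _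
    linarith [key w]
  · have h0 : 0 ≤ ∑ j, (w j - x j)^2 := Finset.sum_nonneg fun j _ => sq_nonneg _
    have h1 : ∑ j, (w j - x j)^2 = 0 := by linarith [key w]
    funext j
    have h2 := (Finset.sum_eq_zero_iff_of_nonneg (fun j _ => sq_nonneg (w j - x j))).1 h1 j
      (Finset.mem_univ j)
    have h3 : w j - x j = 0 := by simpa using h2
    linarith
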